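/- arXiv:1511.08463 — 4 statements merged into one kernel-verified Lean document; each statement's English description precedes it below -/
import Mathlib

section
/- The squared Fischer–Burmeister function is continuously differentiable on all of ℝ²: the map (a,b) ↦ (√(a² + b²) − a − b)² is C¹ as a function ℝ × ℝ → ℝ (in particular it is differentiable at the origin, where the Fischer–Burmeister function itself is not differentiable is not required—only C¹ regularity of the square is asserted). -/
/-!
A locally Lipschitz function `g` that is `C¹` off its zero set has `C¹` powers `g ^ n` for `n ≥ 2`:
the derivative `n g ^ (n - 1) g'` tends to zero at every zero of `g` because `g'` stays bounded
there. The Fischer–Burmeister function is such a `g`: it is a Euclidean norm minus a linear form,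
so it is Lipschitz and smooth away from the origin, where it vanishes.
-/

open Filter Topology

section LocallyLipschitz

variable {𝕜 E F : Type*} [NontriviallyNormedField 𝕜] [NormedAddCommGroup E]
  [NormedAddCommGroup F] {g : E → F}

theorem isBigO_sub_of_locallyLipschitz (hg : LocallyLipschitz g) (x : E) :
    (fun y => g y - g x) =O[𝓝 x] fun y => y - x := by
  obtain ⟨K, s, hs, hK⟩ := hg x
  refine Asymptotics.IsBigO.of_bound K ?_
  filter_upwards [hs] with y hy
  exact hK.norm_sub_le hy (mem_of_mem_nhds hs)

variable (𝕜) in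
theorem isBoundedUnder_norm_fderiv_of_locallyLipschitz [NormedSpace 𝕜 E] [NormedSpace 𝕜 F]
    (hg : LocallyLipschitz g) (x : E) :
    (𝓝 x).IsBoundedUnder (· ≤ ·) fun y => ‖fderiv 𝕜 g y‖ := by
  obtain ⟨K, s, hs, hK⟩ := hg x
  refine isBoundedUnder_of_eventually_le (a := (K : ℝ)) ?_
  filter_upwards [eventually_mem_nhds_iff.2 hs] with y hy
  exact norm_fderiv_le_of_lipschitzOn 𝕜 hy hK

end LocallyLipschitz

section Pow

variable {𝕜 E A : Type*} [NontriviallyNormedField 𝕜] [NormedAddCommGroup E] [NormedSpace 𝕜 E]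
  [NormedCommRing A] [NormedAlgebra 𝕜 A] {g : E → A} {n : ℕ}

-- At a zero of `g` the factor `g x ^ (n - 1)` hides a possible junk value of `fderiv 𝕜 g x`.
theorem hasFDerivAt_pow_of_locallyLipschitz (hg : LocallyLipschitz g) (hn : 1 < n) {x : E}
    (hd : g x ≠ 0 → DifferentiableAt 𝕜 g x) :
    HasFDerivAt (fun y => g y ^ n) ((n • g x ^ (n - 1)) • fderiv 𝕜 g x) x := by
  by_cases hx : g x = 0
  · have g_isBigO : g =O[𝓝 x] fun y => y - x := by
      simpa only [hx, sub_zero] using isBigO_sub_of_locallyLipschitz hg x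
    have deriv_zero : HasFDerivAt (fun y => g y ^ n) (0 : E →L[𝕜] A) x :=
      (g_isBigO.norm_right.pow n).hasFDerivAt hn
    have factor_eq_zero : n • g x ^ (n - 1) = 0 := by simp [hx, Nat.sub_ne_zero_of_lt hn]
    rwa [factor_eq_zero, zero_smul A (fderiv 𝕜 g x)]
  · exact (hd hx).hasFDerivAt.pow n

theorem tendsto_smul_fderiv_zero_of_locallyLipschitz (hg : LocallyLipschitz g) {c : E → A} {x : E}
    (hc : Tendsto c (𝓝 x) (𝓝 0)) : Tendsto (fun y => c y • fderiv 𝕜 g y) (𝓝 x) (𝓝 0) := by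
  have norm_smul_clm_le (a : A) (L : E →L[𝕜] A) : ‖a • L‖ ≤ ‖a‖ * ‖L‖ := by
    refine (a • L).opNorm_le_bound (by positivity) fun v => ?_
    calc ‖a * L v‖ ≤ ‖a‖ * ‖L v‖ := norm_mul_le a (L v)
      _ ≤ ‖a‖ * (‖L‖ * ‖v‖) := by gcongr; exact L.le_opNorm v
      _ = ‖a‖ * ‖L‖ * ‖v‖ := (mul_assoc _ _ _).symm
  exact hc.op_zero_isBoundedUnder_le (isBoundedUnder_norm_fderiv_of_locallyLipschitz 𝕜 hg x)
    (· • ·) norm_smul_clm_le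

theorem contDiff_one_pow_of_locallyLipschitz (hg : LocallyLipschitz g) (hn : 1 < n)
    (hd : ∀ x, g x ≠ 0 → ContDiffAt 𝕜 1 g x) : ContDiff 𝕜 1 fun x => g x ^ n := by
  have hasFDerivAt_pow (x : E) :
      HasFDerivAt (fun y => g y ^ n) ((n • g x ^ (n - 1)) • fderiv 𝕜 g x) x :=
    hasFDerivAt_pow_of_locallyLipschitz hg hn fun hx => (hd x hx).differentiableAt_one
  refine contDiff_one_iff_fderiv.2 ⟨fun x => (hasFDerivAt_pow x).differentiableAt,
    continuous_iff_continuousAt.2 fun x => ?_⟩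
  by_cases hx : g x = 0
  · have fderiv_pow : fderiv 𝕜 (fun y => g y ^ n) = fun y => (n • g y ^ (n - 1)) • fderiv 𝕜 g y :=
      funext fun y => (hasFDerivAt_pow y).fderiv
    have factor_eq_zero : n • g x ^ (n - 1) = 0 := by simp [hx, Nat.sub_ne_zero_of_lt hn]
    have factor_tendsto : Tendsto (fun y => n • g y ^ (n - 1)) (𝓝 x) (𝓝 0) :=
      factor_eq_zero ▸ ((hg.continuous.pow (n - 1)).const_smul n).tendsto x
    simp only [fderiv_pow, ContinuousAt, factor_eq_zero, zero_smul A (fderiv 𝕜 g x)]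
    exact tendsto_smul_fderiv_zero_of_locallyLipschitz hg factor_tendsto
  · exact ((hd x hx).pow n).continuousAt_fderiv one_ne_zero

end Pow

theorem contDiff_one_norm_sub_pow {E : Type*} [NormedAddCommGroup E] [InnerProductSpace ℝ E]
    {f : E → ℝ} (hf : ContDiff ℝ 1 f) (hf₀ : f 0 = 0) {n : ℕ} (hn : 1 < n) :
    ContDiff ℝ 1 fun x => (‖x‖ - f x) ^ n := by
  refine contDiff_one_pow_of_locallyLipschitz
    (lipschitzWith_one_norm.locallyLipschitz.sub hf.locallyLipschitz) hn fun x hx => ?_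
  have x_ne_zero : x ≠ 0 := by
    rintro rfl
    exact hx (by rw [norm_zero, hf₀, sub_zero])
  exact (contDiffAt_norm ℝ x_ne_zero).sub hf.contDiffAt

/-- The squared Fischer–Burmeister function `(a,b) ↦ (√(a² + b²) − a − b)²` is
continuously differentiable on all of `ℝ²`. -/
theorem contDiff_one_sq_fischerBurmeister :
    ContDiff ℝ 1 (fun p : ℝ × ℝ => (Real.sqrt (p.1 ^ 2 + p.2 ^ 2) - p.1 - p.2) ^ 2) := by
  let e := (WithLp.prodContinuousLinearEquiv 2 ℝ ℝ ℝ).symm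
  have norm_e (p : ℝ × ℝ) : ‖e p‖ = √(p.1 ^ 2 + p.2 ^ 2) := by
    simp [e, WithLp.prod_norm_eq_of_L2]
  have sum_contDiff : ContDiff ℝ 1 fun x : WithLp 2 (ℝ × ℝ) => (e.symm x).1 + (e.symm x).2 := by
    fun_prop
  have sq_contDiff := (contDiff_one_norm_sub_pow sum_contDiff (by simp) one_lt_two).comp e.contDiff
  simpa [Function.comp_def, norm_e, sub_sub] using sq_contDiff
end

section
/- Let n ≥ 1, let D, L, U be n×n complex matrices with D diagonal and every diagonal entry of D nonzero, L strictly lower triangular, and U strictly upper triangular, and let ω be a nonzero real number. Then D − ωL is invertible and the SOR iteration matrix M_ω = (D − ωL)⁻¹(ωU + (1−ω)D) satisfies det M_ω = (1−ω)ⁿ. -/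
open Matrix

/-
A strictly triangular perturbation does not change the determinant of a triangular matrix, so
`det (D - ωL) = det D` and `det (ωU + (1 - ω)D) = det ((1 - ω)D) = (1 - ω)ⁿ det D`; in the
determinant of the iteration matrix the two factors `det D` cancel.
-/

section TriangularPerturbation

variable {m R : Type*} [LinearOrder m] [Fintype m] [CommRing R] {T N : Matrix m m R}

theorem det_add_eq_det_of_isUpperTriangular (hT : T.IsUpperTriangular)
    (hN : ∀ i j, j ≤ i → N i j = 0) : (T + N).det = T.det := by
  have hN_upper : N.IsUpperTriangular := fun i j hji ↦ hN i j (le_of_lt hji)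
  rw [det_of_isUpperTriangular (hT.add hN_upper), det_of_isUpperTriangular hT]
  simp only [Matrix.add_apply, hN _ _ le_rfl, add_zero]

theorem det_add_eq_det_of_isLowerTriangular (hT : T.IsLowerTriangular)
    (hN : ∀ i j, i ≤ j → N i j = 0) : (T + N).det = T.det := by
  rw [← det_transpose, transpose_add, ← det_transpose T]
  exact det_add_eq_det_of_isUpperTriangular hT.transpose fun i j hji ↦ hN j i hji

end TriangularPerturbation

section SOR

variable {m R : Type*} [LinearOrder m] [Fintype m] [CommRing R] {D L U : Matrix m m R}

theorem det_sub_smul_eq_det_of_isLowerTriangular (hD : D.IsLowerTriangular)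
    (hL : ∀ i j, i ≤ j → L i j = 0) (a : R) : (D - a • L).det = D.det := by
  rw [sub_eq_add_neg]
  refine det_add_eq_det_of_isLowerTriangular hD fun i j hij ↦ ?_
  rw [Matrix.neg_apply, Matrix.smul_apply, hL i j hij, smul_zero, neg_zero]

theorem det_smul_add_smul_of_isUpperTriangular (hD : D.IsUpperTriangular)
    (hU : ∀ i j, j ≤ i → U i j = 0) (a b : R) :
    (a • U + b • D).det = b ^ Fintype.card m * D.det := by
  have hbD : (b • D).IsUpperTriangular := fun i j hji ↦ by
    rw [Matrix.smul_apply, hD hji, smul_zero]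
  have haU : ∀ i j, j ≤ i → (a • U) i j = 0 := fun i j hji ↦ by
    rw [Matrix.smul_apply, hU i j hji, smul_zero]
  rw [add_comm, det_add_eq_det_of_isUpperTriangular hbD haU, det_smul]

theorem sor_iteration_matrix_det_general (hD : D.IsDiag) (hDdiag : ∀ i, IsUnit (D i i))
    (hL : ∀ i j, i ≤ j → L i j = 0) (hU : ∀ i j, j ≤ i → U i j = 0) (ω : R) :
    IsUnit (D - ω • L).det ∧
      ((D - ω • L)⁻¹ * (ω • U + (1 - ω) • D)).det = (1 - ω) ^ Fintype.card m := by
  have hD_upper : D.IsUpperTriangular := fun _ _ hji ↦ hD (ne_of_gt hji)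
  have hD_lower : D.IsLowerTriangular := fun _ _ hij ↦ hD (ne_of_lt hij)
  have hD_det : IsUnit D.det := by
    rw [det_of_isUpperTriangular hD_upper]
    exact IsUnit.prod_univ_iff.mpr hDdiag
  have h_lower : (D - ω • L).det = D.det :=
    det_sub_smul_eq_det_of_isLowerTriangular hD_lower hL ω
  have h_unit : IsUnit (D - ω • L).det := h_lower ▸ hD_det
  refine ⟨h_unit, ?_⟩
  calc ((D - ω • L)⁻¹ * (ω • U + (1 - ω) • D)).det
      = (D - ω • L)⁻¹.det * ((1 - ω) ^ Fintype.card m * (D - ω • L).det) := by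
        rw [det_mul, det_smul_add_smul_of_isUpperTriangular hD_upper hU, h_lower]
    _ = (1 - ω) ^ Fintype.card m := by
        rw [mul_left_comm, det_nonsing_inv_mul_det _ h_unit, mul_one]

end SOR

/-- Determinant of the SOR iteration matrix: with `D` diagonal with nonzero diagonal
entries, `L` strictly lower triangular, `U` strictly upper triangular and `ω ≠ 0`,
the matrix `D − ωL` is invertible and
`det ((D − ωL)⁻¹ (ωU + (1−ω)D)) = (1−ω)ⁿ`. -/
theorem sor_iteration_matrix_det (n : ℕ) (hn : 1 ≤ n)
    (D L U : Matrix (Fin n) (Fin n) ℂ)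
    (hD : D.IsDiag) (hDdiag : ∀ i, D i i ≠ 0)
    (hL : ∀ i j : Fin n, i ≤ j → L i j = 0)
    (hU : ∀ i j : Fin n, j ≤ i → U i j = 0)
    (ω : ℝ) (hω : ω ≠ 0) :
    IsUnit (D - (ω : ℂ) • L).det ∧
      ((D - (ω : ℂ) • L)⁻¹ * ((ω : ℂ) • U + ((1 - ω : ℝ) : ℂ) • D)).det =
        ((1 - ω : ℝ) : ℂ) ^ n := by
  simpa only [Complex.ofReal_sub, Complex.ofReal_one, Fintype.card_fin] using
    sor_iteration_matrix_det_general hD (fun i ↦ (hDdiag i).isUnit) hL hU (ω : ℂ)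
end

section
/- (Kahan's necessity theorem.) Let n ≥ 1, let D, L, U be n×n complex matrices with D diagonal and every diagonal entry of D nonzero, L strictly lower triangular, and U strictly upper triangular, let ω be a nonzero real number, and let M_ω = (D − ωL)⁻¹(ωU + (1−ω)D) be the SOR iteration matrix. Then M_ω has an eigenvalue μ with ‖μ‖ ≥ |1 − ω|; consequently, if every eigenvalue of M_ω has modulus strictly less than 1 (i.e. the spectral radius of M_ω is less than 1), then 0 < ω < 2. -/
open Matrix

/-!
Kahan's argument is a determinant count. Triangularity kills the contributions of `L` and `U`, so
`det M_ω = (det D)⁻¹ * det ((1 - ω) D) = (1 - ω) ^ n`. As the determinant is the product of the `n`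
eigenvalues, they cannot all be smaller in modulus than `|1 - ω|`.
-/

/-- The SOR iteration matrix `M_ω = (D - ωL)⁻¹(ωU + (1 - ω)D)` of the splitting `D - L - U` with
relaxation parameter `ω`. As `⁻¹` is Mathlib's total inverse of matrices, this is `0` when the
determinant of `D - ωL` is not a unit. -/
noncomputable def sorIterationMatrix {ι R : Type*} [CommRing R] [Fintype ι] [DecidableEq ι]
    (D L U : Matrix ι ι R) (ω : R) : Matrix ι ι R :=
  (D - ω • L)⁻¹ * (ω • U + (1 - ω) • D)

section Determinants

lemma blockTriangular_of_isDiag {ι α R : Type*} [Zero R] [Preorder α] {D : Matrix ι ι R}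
    (hD : D.IsDiag) (b : ι → α) : D.BlockTriangular b :=
  fun _ _ hlt => hD fun heq => hlt.ne' (congrArg b heq)

variable {ι R : Type*} [CommRing R] [Fintype ι] [LinearOrder ι]

lemma det_add_strictlyUpper {T N : Matrix ι ι R} (hT : T.IsUpperTriangular)
    (hN : ∀ i j, j ≤ i → N i j = 0) : (T + N).det = T.det := by
  have hTN : (T + N).IsUpperTriangular := hT.add fun i j hij => hN i j (le_of_lt hij)
  rw [det_of_isUpperTriangular hTN, det_of_isUpperTriangular hT]
  exact Finset.prod_congr rfl fun i _ => by rw [Matrix.add_apply, hN i i le_rfl, add_zero]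

lemma det_add_strictlyLower {T N : Matrix ι ι R} (hT : T.IsLowerTriangular)
    (hN : ∀ i j, i ≤ j → N i j = 0) : (T + N).det = T.det := by
  have hTT : Tᵀ.IsUpperTriangular := fun _ _ hji => hT hji
  have hNT : ∀ i j, j ≤ i → Nᵀ i j = 0 := fun i j hji => hN j i hji
  rw [← det_transpose, transpose_add, det_add_strictlyUpper hTT hNT, det_transpose]

lemma det_sorIterationMatrix {D L U : Matrix ι ι R} (hD : D.IsDiag) (hDdet : IsUnit D.det)
    (hL : ∀ i j, i ≤ j → L i j = 0) (hU : ∀ i j, j ≤ i → U i j = 0) (ω : R) :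
    (sorIterationMatrix D L U ω).det = (1 - ω) ^ Fintype.card ι := by
  have hlower : (D - ω • L).det = D.det := by
    rw [sub_eq_add_neg]
    exact det_add_strictlyLower (blockTriangular_of_isDiag hD _) fun i j hij => by
      simp [hL i j hij]
  have hupper : (ω • U + (1 - ω) • D).det = (1 - ω) ^ Fintype.card ι * D.det := by
    rw [add_comm, det_add_strictlyUpper (blockTriangular_of_isDiag (hD.smul _) _), det_smul]
    exact fun i j hji => by simp [hU i j hji]
  rw [sorIterationMatrix, det_mul, det_nonsing_inv, hlower, hupper, mul_left_comm,
    Ring.inverse_mul_cancel _ hDdet, mul_one]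

end Determinants

section Eigenvalues

lemma norm_multiset_prod_lt_pow_card {R : Type*} [SeminormedCommRing R] {s : Multiset R} {c : ℝ}
    (hs : s ≠ 0) (h : ∀ x ∈ s, ‖x‖ < c) : ‖s.prod‖ < c ^ s.card := by
  induction s using Multiset.induction_on with
  | empty => exact absurd rfl hs
  | cons a s ih =>
    obtain ⟨ha, hlt⟩ := Multiset.forall_mem_cons.mp h
    obtain rfl | hs' := eq_or_ne s 0
    · simpa using ha
    · calc ‖(a ::ₘ s).prod‖ = ‖a * s.prod‖ := by rw [Multiset.prod_cons]
        _ ≤ ‖a‖ * ‖s.prod‖ := norm_mul_le _ _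
        _ < c * c ^ s.card := mul_lt_mul'' ha (ih hs' hlt) (norm_nonneg _) (norm_nonneg _)
        _ = c ^ (a ::ₘ s).card := by rw [Multiset.card_cons, pow_succ']

lemma exists_mem_spectrum_le_norm_of_pow_card_le_norm_det {ι K : Type*} [Fintype ι] [DecidableEq ι]
    [Nonempty ι] [NormedField K] {M : Matrix ι ι K} (hM : M.charpoly.Splits) {c : ℝ}
    (hc : c ^ Fintype.card ι ≤ ‖M.det‖) : ∃ μ ∈ spectrum K M, c ≤ ‖μ‖ := by
  by_contra! hlt
  have hcard : M.charpoly.roots.card = Fintype.card ι := by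
    rw [← hM.natDegree_eq_card_roots, charpoly_natDegree_eq_dim]
  have hroots : M.charpoly.roots ≠ 0 := by
    rw [← Multiset.card_pos, hcard]
    exact Fintype.card_pos
  refine hc.not_gt ?_
  rw [det_eq_prod_roots_charpoly_of_splits hM, ← hcard]
  exact norm_multiset_prod_lt_pow_card hroots fun μ hμ =>
    hlt μ (mem_spectrum_of_isRoot_charpoly (Polynomial.isRoot_of_mem_roots hμ))

end Eigenvalues

theorem kahan_necessity_general {ι K : Type*} [Fintype ι] [LinearOrder ι] [Nonempty ι]
    [NormedField K] [IsAlgClosed K] {D L U : Matrix ι ι K}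
    (hD : D.IsDiag) (hDdiag : ∀ i, D i i ≠ 0)
    (hL : ∀ i j, i ≤ j → L i j = 0) (hU : ∀ i j, j ≤ i → U i j = 0) (ω : K) :
    (∃ μ ∈ spectrum K (sorIterationMatrix D L U ω), ‖1 - ω‖ ≤ ‖μ‖) ∧
    ((∀ μ ∈ spectrum K (sorIterationMatrix D L U ω), ‖μ‖ < 1) → ‖1 - ω‖ < 1) := by
  have hDdet : IsUnit D.det := by
    rw [det_of_isUpperTriangular (blockTriangular_of_isDiag hD _), isUnit_iff_ne_zero]
    exact Finset.prod_ne_zero_iff.mpr fun i _ => hDdiag i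
  obtain ⟨μ, hμ, hle⟩ : ∃ μ ∈ spectrum K (sorIterationMatrix D L U ω), ‖1 - ω‖ ≤ ‖μ‖ := by
    apply exists_mem_spectrum_le_norm_of_pow_card_le_norm_det (IsAlgClosed.splits _)
    rw [det_sorIterationMatrix hD hDdet hL hU, norm_pow]
  exact ⟨⟨μ, hμ, hle⟩, fun h => hle.trans_lt (h μ hμ)⟩

lemma abs_one_sub_lt_one_iff {ω : ℝ} : |1 - ω| < 1 ↔ 0 < ω ∧ ω < 2 := by
  rw [abs_lt]
  constructor <;> rintro ⟨h₁, h₂⟩ <;> constructor <;> linarith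

/-- Kahan's necessity theorem: the SOR iteration matrix
`M_ω = (D − ωL)⁻¹(ωU + (1−ω)D)` has an eigenvalue of modulus at least `|1 − ω|`;
consequently, if all its eigenvalues have modulus less than one, then `0 < ω < 2`. -/
theorem kahan_necessity (n : ℕ) (hn : 1 ≤ n)
    (D L U : Matrix (Fin n) (Fin n) ℂ)
    (hD : D.IsDiag) (hDdiag : ∀ i, D i i ≠ 0)
    (hL : ∀ i j : Fin n, i ≤ j → L i j = 0)
    (hU : ∀ i j : Fin n, j ≤ i → U i j = 0)
    (ω : ℝ) (hω : ω ≠ 0) :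
    (∃ μ ∈ spectrum ℂ
        ((D - (ω : ℂ) • L)⁻¹ * ((ω : ℂ) • U + ((1 - ω : ℝ) : ℂ) • D)),
        |1 - ω| ≤ ‖μ‖) ∧
    ((∀ μ ∈ spectrum ℂ
        ((D - (ω : ℂ) • L)⁻¹ * ((ω : ℂ) • U + ((1 - ω : ℝ) : ℂ) • D)),
        ‖μ‖ < 1) → 0 < ω ∧ ω < 2) := by
  have : Nonempty (Fin n) := ⟨⟨0, hn⟩⟩
  simpa only [sorIterationMatrix, ← Complex.ofReal_one, ← Complex.ofReal_sub, Complex.norm_real,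
    Real.norm_eq_abs, abs_one_sub_lt_one_iff] using kahan_necessity_general hD hDdiag hL hU (ω : ℂ)
end

section
/- (Ostrowski's sufficiency theorem.) Let n ≥ 1 and let A be an n×n real symmetric positive-definite matrix, written as A = D − L − Lᵀ where D is the diagonal part of A and L is strictly lower triangular. Then for every real ω with 0 < ω < 2, the matrix D − ωL is invertible and every complex eigenvalue μ of the SOR iteration matrix M_ω = (D − ωL)⁻¹(ωLᵀ + (1−ω)D) satisfies ‖μ‖ < 1; i.e. the spectral radius of M_ω is strictly less than 1, so the SOR method converges. -/
open Matrix

/-!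
Let `A = D - L - Lᴴ`, `M = D - ωL` and `N = ωLᴴ + (1 - ω)D`. Then `M - N = ωA` and
`Mᴴ + N = (2 - ω)D` are both positive definite. For `x ≠ 0`, the numbers `m = xᴴMx` and `n = xᴴNx`
therefore satisfy `m - n > 0` and `star m + n > 0`, so that
`|m|² - |n|² = (m - n) (star m + n) > 0`. Thus `Mx ≠ 0`, and if `x` is an eigenvector of `M⁻¹N` for
`μ` then `Nx = μMx`, so `|μ| |m| = |n| < |m|`.
-/

section HouseholderJohn

open scoped ComplexOrder MatrixOrder

variable {ι 𝕜 K : Type*} [RCLike 𝕜] [RCLike K]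

theorem norm_lt_norm_of_sub_pos_of_star_add_pos {z w : K} (hsub : 0 < z - w)
    (hadd : 0 < star z + w) : ‖w‖ < ‖z‖ := by
  rw [RCLike.pos_iff] at hsub hadd
  simp only [map_sub, map_add, RCLike.star_def, RCLike.conj_re] at hsub hadd
  have him : RCLike.im z = RCLike.im w := sub_eq_zero.mp hsub.2
  have hre : 0 < (RCLike.re z - RCLike.re w) * (RCLike.re z + RCLike.re w) :=
    mul_pos hsub.1 hadd.1
  rw [← sq_lt_sq₀ (norm_nonneg w) (norm_nonneg z), RCLike.norm_sq_eq_def, RCLike.norm_sq_eq_def,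
    him]
  linarith

theorem posDef_map_algebraMap [Finite ι] [Algebra 𝕜 K] [StarModule 𝕜 K] {A : Matrix ι ι 𝕜}
    (hA : A.PosDef) : (A.map (algebraMap 𝕜 K)).PosDef := by
  classical
  cases nonempty_fintype ι
  obtain ⟨B, hB, rfl⟩ :=
    CStarAlgebra.isStrictlyPositive_iff_eq_star_mul_self.mp hA.isStrictlyPositive
  have hBmap : IsUnit (B.map (algebraMap 𝕜 K)) := hB.map (algebraMap 𝕜 K).mapMatrix
  rw [Matrix.map_mul, star_eq_conjTranspose, conjTranspose_map _ algebraMap_star_comm]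
  exact .conjTranspose_mul_self _ (mulVec_injective_of_isUnit hBmap)

variable [Fintype ι]

theorem norm_dotProduct_mulVec_lt_of_posDef {M N : Matrix ι ι K} (hsub : (M - N).PosDef)
    (hadd : (Mᴴ + N).PosDef) {x : ι → K} (hx : x ≠ 0) :
    ‖star x ⬝ᵥ N *ᵥ x‖ < ‖star x ⬝ᵥ M *ᵥ x‖ := by
  have hstar : star x ⬝ᵥ Mᴴ *ᵥ x = star (star x ⬝ᵥ M *ᵥ x) := by
    rw [star_dotProduct, star_mulVec, conjTranspose_conjTranspose, ← dotProduct_mulVec]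
  apply norm_lt_norm_of_sub_pos_of_star_add_pos
  · simpa only [sub_mulVec, dotProduct_sub] using hsub.dotProduct_mulVec_pos hx
  · simpa only [add_mulVec, dotProduct_add, hstar] using hadd.dotProduct_mulVec_pos hx

variable [DecidableEq ι]

theorem map_nonsing_inv_of_isUnit_det {R S : Type*} [CommRing R] [CommRing S] (f : R →+* S)
    {M : Matrix ι ι R} (hM : IsUnit M.det) : M⁻¹.map f = (M.map f)⁻¹ := by
  refine (inv_eq_left_inv ?_).symm
  rw [← Matrix.map_mul, nonsing_inv_mul M hM, Matrix.map_one f f.map_zero f.map_one]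

theorem isUnit_det_of_norm_dotProduct_mulVec_lt {M N : Matrix ι ι K}
    (hlt : ∀ x ≠ 0, ‖star x ⬝ᵥ N *ᵥ x‖ < ‖star x ⬝ᵥ M *ᵥ x‖) : IsUnit M.det := by
  rw [isUnit_iff_ne_zero, ne_eq, ← exists_mulVec_eq_zero_iff]
  rintro ⟨x, hx, hMx⟩
  have hneg := hlt x hx
  rw [hMx, dotProduct_zero, norm_zero] at hneg
  exact hneg.not_ge (norm_nonneg _)

theorem norm_lt_one_of_mem_spectrum_inv_mul {M N : Matrix ι ι K}
    (hlt : ∀ x ≠ 0, ‖star x ⬝ᵥ N *ᵥ x‖ < ‖star x ⬝ᵥ M *ᵥ x‖) {μ : K}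
    (hμ : μ ∈ spectrum K (M⁻¹ * N)) : ‖μ‖ < 1 := by
  rw [← spectrum_toLin', ← Module.End.hasEigenvalue_iff_mem_spectrum] at hμ
  obtain ⟨x, hx⟩ := hμ.exists_hasEigenvector
  have hNx : N *ᵥ x = μ • M *ᵥ x := by
    rw [← mulVec_smul, ← hx.apply_eq_smul, toLin'_apply, mulVec_mulVec,
      mul_nonsing_inv_cancel_left _ _ (isUnit_det_of_norm_dotProduct_mulVec_lt hlt)]
  have hform := hlt x hx.2
  have hpos : 0 < ‖star x ⬝ᵥ M *ᵥ x‖ := (norm_nonneg _).trans_lt hform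
  rw [hNx, dotProduct_smul, norm_smul] at hform
  exact (mul_lt_iff_lt_one_left hpos).mp hform

theorem householder_john [Algebra 𝕜 K] [StarModule 𝕜 K] {M N : Matrix ι ι 𝕜}
    (hsub : (M - N).PosDef) (hadd : (Mᴴ + N).PosDef) :
    IsUnit M.det ∧ ∀ μ ∈ spectrum K ((M⁻¹ * N).map (algebraMap 𝕜 K)), ‖μ‖ < 1 := by
  have hM : IsUnit M.det := isUnit_det_of_norm_dotProduct_mulVec_lt fun _ hx =>
    norm_dotProduct_mulVec_lt_of_posDef hsub hadd hx
  refine ⟨hM, fun μ hμ => ?_⟩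
  rw [Matrix.map_mul, map_nonsing_inv_of_isUnit_det _ hM] at hμ
  refine norm_lt_one_of_mem_spectrum_inv_mul (fun x hx => ?_) hμ
  apply norm_dotProduct_mulVec_lt_of_posDef _ _ hx
  · simpa only [Matrix.map_sub _ (map_sub _)] using posDef_map_algebraMap (K := K) hsub
  · simpa only [Matrix.map_add _ (map_add _), conjTranspose_map _ algebraMap_star_comm]
      using posDef_map_algebraMap (K := K) hadd

theorem ostrowski_sufficiency_general [Algebra 𝕜 K] [StarModule 𝕜 K] {D L : Matrix ι ι 𝕜}
    (hD : D.PosDef) (hA : (D - L - Lᴴ).PosDef) {ω : ℝ} (hω0 : 0 < ω) (hω2 : ω < 2) :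
    IsUnit (D - ω • L).det ∧
      ∀ μ ∈ spectrum K (((D - ω • L)⁻¹ * (ω • Lᴴ + (1 - ω) • D)).map (algebraMap 𝕜 K)),
        ‖μ‖ < 1 := by
  apply householder_john
  · have hsub : D - ω • L - (ω • Lᴴ + (1 - ω) • D) = ω • (D - L - Lᴴ) := by module
    exact hsub ▸ hA.smul hω0
  · have hadd : (D - ω • L)ᴴ + (ω • Lᴴ + (1 - ω) • D) = (2 - ω) • D := by
      rw [conjTranspose_sub, conjTranspose_smul, hD.isHermitian.eq, star_trivial]
      module
    exact hadd ▸ hD.smul (sub_pos.mpr hω2)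

end HouseholderJohn

/-- Ostrowski's sufficiency theorem: for a real symmetric positive-definite matrix
`A = D − L − Lᵀ` (with `D` its diagonal part and `L` strictly lower triangular),
for every `ω ∈ (0, 2)` the matrix `D − ωL` is invertible and every complex
eigenvalue of the SOR iteration matrix `M_ω = (D − ωL)⁻¹(ωLᵀ + (1−ω)D)` has
modulus strictly less than one. -/
theorem ostrowski_sufficiency (n : ℕ) (hn : 1 ≤ n)
    (A L : Matrix (Fin n) (Fin n) ℝ)
    (hA : A.PosDef)
    (hL : ∀ i j : Fin n, i ≤ j → L i j = 0)
    (hsplit : A = Matrix.diagonal (fun i => A i i) - L - Lᵀ)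
    (ω : ℝ) (hω0 : 0 < ω) (hω2 : ω < 2) :
    IsUnit (Matrix.diagonal (fun i => A i i) - ω • L).det ∧
      ∀ μ ∈ spectrum ℂ
        (((Matrix.diagonal (fun i => A i i) - ω • L)⁻¹ *
          (ω • Lᵀ + (1 - ω) • Matrix.diagonal (fun i => A i i))).map
            (algebraMap ℝ ℂ)),
        ‖μ‖ < 1 := by
  have hA' : (diagonal (fun i => A i i) - L - Lᴴ).PosDef := by
    rwa [conjTranspose_eq_transpose_of_trivial, ← hsplit]
  exact ostrowski_sufficiency_general (.diagonal fun _ => hA.diag_pos) hA' hω0 hω2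
end
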